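/- Let n ≥ 1, δ ∈ (0,1], θ ∈ (0,δ]. Let F₁, F₂, F₃ : [0,∞) → [0,∞) be bounded with F₁ non-decreasing and F₂, F₃ non-increasing. Let J, K ⊂ ℝ^n be cubes with K ⊂ J, and let ℓ > 0 satisfy d(K, ℝ^n∖J) ≥ ℓ ≥ ℓ(K). Then ∫_{ℝ^n∖J} ∫_{ℝ^n∖(3K)} ∫_K F₁(|x−c_K|) F₂(|x−y|+|x−z|) F₃(1 + (|x+y|+|x+z|)/(1+|x−y|+|x−z|)) · ℓ(K)^δ / (|x−y|+|x−z|)^{2n+δ} dx dy dz ≤ C F₁(ℓ(K)) F₂(ℓ(K)) F̃₃(J) |K| (ℓ(K)/ℓ)^δ, where the integral is with respect to Lebesgue measure in x ∈ K, y ∈ ℝ^n∖(3K), z ∈ ℝ^n∖J, and C depends only on n, δ and θ. -/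

import Mathlib

open MeasureTheory Set
open scoped ENNReal NNReal

noncomputable section

abbrev Rn (n : ℕ) := Fin n → ℝ

/-- A (half-open, axis-parallel) cube in `ℝⁿ` (with the `ℓ^∞` metric),
given by its lower-left corner and its (positive) sidelength. -/
structure Cube (n : ℕ) where
  corner : Fin n → ℝ
  len : ℝ
  len_pos : 0 < len

namespace Cube

/-- The underlying set `∏_i [aᵢ, aᵢ + ℓ)` of a cube. -/
def toSet {n : ℕ} (I : Cube n) : Set (Rn n) :=
  {x | ∀ i, I.corner i ≤ x i ∧ x i < I.corner i + I.len}

/-- The center of a cube. -/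
def center {n : ℕ} (I : Cube n) : Rn n := fun i => I.corner i + I.len / 2

/-- `λI`: the cube with the same center and sidelength `λ ℓ(I)`. -/
def dilate {n : ℕ} (I : Cube n) (lam : ℝ) (hlam : 0 < lam) : Cube n :=
  ⟨fun i => I.center i - lam * I.len / 2, lam * I.len, mul_pos hlam I.len_pos⟩

end Cube

/-- The unit cube `𝕀 = [-1/2, 1/2)^n`. -/
def unitCube (n : ℕ) : Cube n := ⟨fun _ => -(1 / 2 : ℝ), 1, one_pos⟩

/-- The distance `d(E, F) = inf {|x - y| : x ∈ E, y ∈ F}` between two sets. -/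
def sDist {α : Type*} [PseudoMetricSpace α] (E F : Set α) : ℝ :=
  sInf ((fun q : α × α => dist q.1 q.2) '' (E ×ˢ F))

/-- The relative distance `rd(I, J) = d(I, J) / max{ℓ(I), ℓ(J)}` between two cubes. -/
def relDist {n : ℕ} (I J : Cube n) : ℝ :=
  sDist I.toSet J.toSet / max I.len J.len

/-- `F̃₂(t) = Σ_{k=0}^∞ 2^{-kθ} F₂(2^{-k} t)`. -/
def Ft2 (θ : ℝ) (F₂ : ℝ → ℝ) (t : ℝ) : ℝ :=
  ∑' k : ℕ, (2 : ℝ) ^ (-(k : ℝ) * θ) * F₂ ((2 : ℝ) ^ (-(k : ℝ)) * t)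

/-- `F̃₃(Q) = Σ_{k=0}^∞ 2^{-kθ} F₃(rd(2^k Q, 𝕀))`. -/
def Ft3 {n : ℕ} (θ : ℝ) (F₃ : ℝ → ℝ) (Q : Cube n) : ℝ :=
  ∑' k : ℕ, (2 : ℝ) ^ (-(k : ℝ) * θ) *
    F₃ (relDist (Q.dilate ((2 : ℝ) ^ k) (by positivity)) (unitCube n))

theorem aux_sDist_le {n : ℕ} {E F : Set (Rn n)} {x y : Rn n} (hx : x ∈ E) (hy : y ∈ F) :
    sDist E F ≤ dist x y := by
  unfold sDist
  refine csInf_le ⟨0, ?_⟩ ⟨(x, y), ⟨hx, hy⟩, rfl⟩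
  rintro _ ⟨q, _, rfl⟩
  exact dist_nonneg

theorem aux_sDist_nonneg {n : ℕ} (E F : Set (Rn n)) : 0 ≤ sDist E F := by
  unfold sDist
  apply Real.sInf_nonneg
  rintro _ ⟨q, _, rfl⟩
  exact dist_nonneg

theorem aux_measurableSet {n : ℕ} (I : Cube n) : MeasurableSet I.toSet := by
  have : I.toSet = Set.pi Set.univ (fun i => Set.Ico (I.corner i) (I.corner i + I.len)) := by
    ext x; simp [Cube.toSet]
  rw [this]
  exact MeasurableSet.univ_pi (fun i => measurableSet_Ico)

theorem aux_vol_ne_top {n : ℕ} (I : Cube n) : volume I.toSet ≠ ⊤ := by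
  have : I.toSet = Set.pi Set.univ (fun i => Set.Ico (I.corner i) (I.corner i + I.len)) := by
    ext x; simp [Cube.toSet]
  rw [this, Real.volume_pi_Ico]
  exact (ENNReal.prod_lt_top (fun i _ => ENNReal.ofReal_lt_top)).ne

theorem aux_dist_center {n : ℕ} (I : Cube n) {x : Rn n} (hx : x ∈ I.toSet) :
    dist x I.center ≤ I.len / 2 := by
  have := I.len_pos
  rw [dist_pi_le_iff (by linarith)]
  intro i
  have := hx i
  rw [Real.dist_eq, abs_le]
  simp only [Cube.center]
  constructor <;> linarith

theorem aux_mem_dilate {n : ℕ} (I : Cube n) {x : Rn n} (hx : x ∈ I.toSet) (lam : ℝ)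
    (h0 : 0 < lam) (h : 1 ≤ lam) : x ∈ (I.dilate lam h0).toSet := by
  intro i
  have := hx i
  have := I.len_pos
  simp only [Cube.dilate, Cube.center]
  constructor <;> nlinarith

theorem aux_l_le {n : ℕ} (hn : 1 ≤ n) (J K : Cube n) (l : ℝ) (hKJ : K.toSet ⊆ J.toSet)
    (hl : l ≤ sDist K.toSet (J.toSet)ᶜ) : l ≤ J.len := by
  have hJ := J.len_pos
  have hx : K.corner ∈ K.toSet := fun i => ⟨le_refl _, by linarith [K.len_pos]⟩
  have hz : (fun i => K.corner i + J.len) ∈ (J.toSet)ᶜ := by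
    intro h
    have h1 := h ⟨0, hn⟩
    have h2 := hKJ hx ⟨0, hn⟩
    linarith [h1.2, h2.1]
  refine hl.trans ((aux_sDist_le hx hz).trans ?_)
  rw [dist_pi_le_iff hJ.le]
  intro i
  rw [Real.dist_eq, abs_le]
  constructor <;> linarith

/-- relative distance bound -/
theorem aux_relDist_le {n : ℕ} (J : Cube n) {x y z : Rn n} (hx : x ∈ J.toSet) (k : ℕ)
    (h0 : (0 : ℝ) < 2 ^ k) (hr : dist x y + dist x z ≤ 2 ^ k * J.len) :
    relDist (J.dilate (2 ^ k) h0) (unitCube n) ≤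
      1 + (‖x + y‖ + ‖x + z‖) / (1 + dist x y + dist x z) := by
  have h1 : sDist (J.dilate (2 ^ k) h0).toSet (unitCube n).toSet ≤ ‖x‖ := by
    have : (0 : Rn n) ∈ (unitCube n).toSet := by
      intro i; simp only [unitCube, Pi.zero_apply]; constructor <;> norm_num
    have h := aux_sDist_le (aux_mem_dilate J hx (2 ^ k) h0 (one_le_pow₀ (by norm_num))) this
    simpa using h
  have hy : 2 * ‖x‖ ≤ ‖x + y‖ + dist x y := by
    rw [dist_eq_norm]
    calc 2 * ‖x‖ = ‖(x + y) + (x - y)‖ := by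
          rw [show (x + y) + (x - y) = (2 : ℝ) • x by module, norm_smul]; norm_num
      _ ≤ _ := norm_add_le _ _
  have hz : 2 * ‖x‖ ≤ ‖x + z‖ + dist x z := by
    rw [dist_eq_norm]
    calc 2 * ‖x‖ = ‖(x + z) + (x - z)‖ := by
          rw [show (x + z) + (x - z) = (2 : ℝ) • x by module, norm_smul]; norm_num
      _ ≤ _ := norm_add_le _ _
  have hdy : 0 ≤ dist x y := dist_nonneg
  have hdz : 0 ≤ dist x z := dist_nonneg
  have hxn := norm_nonneg x
  unfold relDist
  set M := max (J.dilate (2 ^ k) h0).len (unitCube n).len with hM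
  have hM1 : 1 ≤ M := le_max_right _ _
  have hM2 : 2 ^ k * J.len ≤ M := le_max_left _ _
  have e : 1 + (‖x + y‖ + ‖x + z‖) / (1 + dist x y + dist x z)
      = (1 + dist x y + dist x z + (‖x + y‖ + ‖x + z‖)) / (1 + dist x y + dist x z) := by
    field_simp
  rw [e, div_le_div_iff₀ (by linarith) (by linarith)]
  calc _ ≤ ‖x‖ * (2 * M) := by gcongr; linarith
    _ ≤ _ := by nlinarith

theorem aux_int {n : ℕ} (p R : ℝ) (hR : 0 < R) (c : Rn n) :
    ∫⁻ y : Rn n, ENNReal.ofReal ((R + dist c y) ^ (-p)) =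
      ENNReal.ofReal (R ^ ((n : ℝ) - p)) * ∫⁻ u : Rn n, ENNReal.ofReal ((1 + ‖u‖) ^ (-p)) := by
  have h1 : ∀ y : Rn n, ENNReal.ofReal ((R + dist c y) ^ (-p)) =
      ENNReal.ofReal (R ^ (-p)) * ENNReal.ofReal ((1 + ‖R⁻¹ • (y - c)‖) ^ (-p)) := by
    intro y
    rw [← ENNReal.ofReal_mul (by positivity), ← Real.mul_rpow hR.le (by positivity), norm_smul,
      dist_comm, dist_eq_norm, Real.norm_of_nonneg (by positivity)]
    congr 2
    field_simp
  have hm : Measurable (fun u : Rn n => ENNReal.ofReal ((1 + ‖u‖) ^ (-p))) := by fun_prop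
  simp_rw [h1]
  rw [lintegral_const_mul _ (by fun_prop),
    lintegral_sub_right_eq_self (fun y : Rn n => ENNReal.ofReal ((1 + ‖R⁻¹ • y‖) ^ (-p))) c]
  have h2 : ∫⁻ y : Rn n, ENNReal.ofReal ((1 + ‖R⁻¹ • y‖) ^ (-p)) =
      ENNReal.ofReal (R ^ (n : ℝ)) * ∫⁻ u : Rn n, ENNReal.ofReal ((1 + ‖u‖) ^ (-p)) := by
    have h := lintegral_map (μ := (volume : Measure (Rn n))) hm
      (g := fun y : Rn n => R⁻¹ • y) (by fun_prop)
    rw [← h, Measure.map_addHaar_smul _ (inv_ne_zero hR.ne'), lintegral_smul_measure]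
    simp [abs_of_pos hR]
  rw [h2, ← mul_assoc, ← ENNReal.ofReal_mul (by positivity), ← Real.rpow_add hR]
  congr 3
  ring

/-- radii -/
def auxR (l L : ℝ) (k : ℕ) : ℝ := if k = 0 then l else 2 ^ k * L / 2

theorem aux_exists_k (l L r : ℝ) (hl : 0 < l) (hL : 0 < L) (hr : l ≤ r) :
    ∃ k : ℕ, r ≤ 2 ^ k * L ∧ auxR l L k ≤ r := by
  classical
  have hex : ∃ k : ℕ, r ≤ 2 ^ k * L := by
    obtain ⟨k, hk⟩ := pow_unbounded_of_one_lt (r / L) (by norm_num : (1 : ℝ) < 2)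
    exact ⟨k, by rw [div_lt_iff₀ hL] at hk; exact hk.le⟩
  refine ⟨Nat.find hex, Nat.find_spec hex, ?_⟩
  unfold auxR
  split_ifs with h
  · exact hr
  · obtain ⟨m, hm⟩ := Nat.exists_eq_succ_of_ne_zero h
    have := Nat.find_min hex (m := m) (by omega)
    rw [hm, Nat.succ_eq_add_one, pow_succ]
    push Not at this
    linarith

theorem auxR_pos (l L : ℝ) (hl : 0 < l) (hL : 0 < L) (k : ℕ) : 0 < auxR l L k := by
  unfold auxR; split_ifs <;> positivity

theorem auxR_bound (l L δ θ : ℝ) (hl : 0 < l) (hlL : l ≤ L) (hδ : 0 < δ) (hθ : θ ≤ δ) (k : ℕ) :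
    (auxR l L k) ^ (-δ) ≤ 2 ^ δ * (2 : ℝ) ^ (-(k : ℝ) * θ) * l ^ (-δ) := by
  have hL : 0 < L := hl.trans_le hlL
  have h1 : 2 ^ k * l / 2 ≤ auxR l L k := by
    unfold auxR
    split_ifs with h
    · subst h; simp; linarith
    · gcongr
  calc (auxR l L k) ^ (-δ) ≤ (2 ^ k * l / 2) ^ (-δ) :=
        Real.rpow_le_rpow_of_nonpos (by positivity) h1 (by linarith)
    _ = 2 ^ δ * (2 : ℝ) ^ (-(k : ℝ) * δ) * l ^ (-δ) := by
        rw [Real.div_rpow (by positivity) (by positivity), Real.mul_rpow (by positivity) hl.le,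
          ← Real.rpow_natCast, ← Real.rpow_mul (by norm_num), Real.rpow_neg (by norm_num : (0 : ℝ) ≤ 2) δ]
        rw [div_inv_eq_mul]
        rw [show (k : ℝ) * -δ = -(k : ℝ) * δ by ring]
        ring
    _ ≤ _ := by
        have hk : (0 : ℝ) ≤ k := Nat.cast_nonneg k
        gcongr ?_ * ?_ * ?_
        apply Real.rpow_le_rpow_of_exponent_le (by norm_num)
        nlinarith

theorem aux_kernel (p R a b r : ℝ) (hp : 0 ≤ p) (hR : 0 < R) (ha : 0 ≤ a) (hb : 0 ≤ b)
    (h1 : R + a ≤ 3 * r) (h2 : R + b ≤ 3 * r) :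
    1 / r ^ (2 * p) ≤ 3 ^ (2 * p) * ((R + a) ^ (-p) * (R + b) ^ (-p)) := by
  have hr : 0 < r := by linarith
  have e : 1 / r ^ (2 * p) = 3 ^ (2 * p) * ((3 * r) ^ (-p) * (3 * r) ^ (-p)) := by
    rw [← Real.rpow_add (by positivity), show -p + -p = -(2 * p) by ring,
      Real.mul_rpow (by norm_num) hr.le, Real.rpow_neg (by norm_num), Real.rpow_neg hr.le]
    have : (3 : ℝ) ^ (2 * p) ≠ 0 := by positivity
    field_simp
  rw [e]
  have i1 : (3 * r) ^ (-p) ≤ (R + a) ^ (-p) :=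
    Real.rpow_le_rpow_of_nonpos (by linarith) h1 (by linarith)
  have i2 : (3 * r) ^ (-p) ≤ (R + b) ^ (-p) :=
    Real.rpow_le_rpow_of_nonpos (by linarith) h2 (by linarith)
  gcongr

/-- the nested-cubes integral estimate `ℛ²`, with `y` ranging over `(3K)ᶜ`. -/
theorem nested_integral_estimate_far
    (n : ℕ) (hn : 1 ≤ n) (δ θ : ℝ)
    (hδ0 : 0 < δ) (hδ1 : δ ≤ 1) (hθ0 : 0 < θ) (hθδ : θ ≤ δ) :
    ∃ C : ℝ, 0 < C ∧
      ∀ F₁ F₂ F₃ : ℝ → ℝ,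
        (∀ t, 0 ≤ F₁ t) → (∀ t, 0 ≤ F₂ t) → (∀ t, 0 ≤ F₃ t) →
        BddAbove (Set.range F₁) → BddAbove (Set.range F₂) → BddAbove (Set.range F₃) →
        MonotoneOn F₁ (Set.Ici 0) → AntitoneOn F₂ (Set.Ici 0) → AntitoneOn F₃ (Set.Ici 0) →
        ∀ J K : Cube n, ∀ l : ℝ,
          K.toSet ⊆ J.toSet →
          K.len ≤ l → l ≤ sDist K.toSet (J.toSet)ᶜ →
          (∫⁻ z in (J.toSet)ᶜ, ∫⁻ y in ((K.dilate 3 (by norm_num)).toSet)ᶜ, ∫⁻ x in K.toSet,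
              ENNReal.ofReal
                (F₁ (dist x K.center) * F₂ (dist x y + dist x z) *
                  F₃ (1 + (‖x + y‖ + ‖x + z‖) / (1 + dist x y + dist x z)) *
                  K.len ^ δ / (dist x y + dist x z) ^ (2 * (n : ℝ) + δ))) ≤
            ENNReal.ofReal
              (C * F₁ K.len * F₂ K.len * Ft3 θ F₃ J * (volume K.toSet).toReal *
                (K.len / l) ^ δ) := by
  have hp : (n : ℝ) < (n : ℝ) + δ / 2 := by linarith
  set p : ℝ := (n : ℝ) + δ / 2 with hpdef
  have hp0 : 0 ≤ p := by positivity
  set D : ℝ≥0∞ := ∫⁻ u : Rn n, ENNReal.ofReal ((1 + ‖u‖) ^ (-p)) with hD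
  have hDtop : D < ⊤ := finite_integral_one_add_norm (by simpa using hp)
  set d : ℝ := D.toReal with hd
  have hDd : D = ENNReal.ofReal d := (ENNReal.ofReal_toReal hDtop.ne).symm
  have hd0 : 0 ≤ d := ENNReal.toReal_nonneg
  refine ⟨3 ^ (2 * p) * 2 ^ δ * (d ^ 2 + 1), by positivity, ?_⟩
  intro F₁ F₂ F₃ hF1 hF2 hF3 _ _ hB3 hm1 hm2 hm3 J K l hKJ hKl hl
  have hK0 := K.len_pos
  have hJ0 := J.len_pos
  have hl0 : 0 < l := hK0.trans_le hKl
  have hlJ : l ≤ J.len := aux_l_le hn J K l hKJ hl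
  set f : ℕ → ℝ := fun k =>
    F₃ (relDist (J.dilate ((2 : ℝ) ^ k) (by positivity)) (unitCube n)) with hf
  have hf0 : ∀ k, 0 ≤ f k := fun k => hF3 _
  set R : ℕ → ℝ := auxR l J.len with hRdef
  have hR0 : ∀ k, 0 < R k := auxR_pos l J.len hl0 hJ0
  set A : ℝ := F₁ K.len * F₂ K.len * K.len ^ δ * 3 ^ (2 * p) with hA
  have hA0 : 0 ≤ A := by have := hF1 K.len; have := hF2 K.len; positivity
  set G : ℕ → Rn n → ℝ≥0∞ := fun k y => ENNReal.ofReal ((R k + dist K.center y) ^ (-p)) with hG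
  have hGm : ∀ k, Measurable (G k) := fun k => by simp only [hG]; fun_prop
  -- pointwise bound
  have hpt : ∀ z ∈ (J.toSet)ᶜ, ∀ y : Rn n, ∀ x ∈ K.toSet,
      ENNReal.ofReal
        (F₁ (dist x K.center) * F₂ (dist x y + dist x z) *
          F₃ (1 + (‖x + y‖ + ‖x + z‖) / (1 + dist x y + dist x z)) *
          K.len ^ δ / (dist x y + dist x z) ^ (2 * (n : ℝ) + δ)) ≤
      ∑' k, ENNReal.ofReal (A * f k) * (G k y * G k z) := by
    intro z hz y x hx
    have hxz : l ≤ dist x z := hl.trans (aux_sDist_le hx hz)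
    have hxy : 0 ≤ dist x y := dist_nonneg
    set r := dist x y + dist x z with hr
    have hlr : l ≤ r := by linarith
    obtain ⟨k, hk1, hk2⟩ := aux_exists_k l J.len r hl0 hJ0 hlr
    refine le_trans ?_ (ENNReal.le_tsum k)
    simp only [hG]
    rw [← ENNReal.ofReal_mul (Real.rpow_nonneg (by have := hR0 k; positivity) _),
      ← ENNReal.ofReal_mul (mul_nonneg hA0 (hf0 k))]
    apply ENNReal.ofReal_le_ofReal
    have hc := aux_dist_center K hx
    have b1 : F₁ (dist x K.center) ≤ F₁ K.len :=
      hm1 (mem_Ici.2 dist_nonneg) (mem_Ici.2 hK0.le) (by linarith)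
    have b2 : F₂ r ≤ F₂ K.len :=
      hm2 (mem_Ici.2 hK0.le) (mem_Ici.2 (by linarith)) (by linarith)
    have b3 : F₃ (1 + (‖x + y‖ + ‖x + z‖) / (1 + dist x y + dist x z)) ≤ f k := by
      apply hm3 _ _ (aux_relDist_le J (hKJ hx) k (by positivity) hk1)
      · exact mem_Ici.2 (div_nonneg (aux_sDist_nonneg _ _)
          (le_trans zero_le_one (le_max_right _ _)))
      · exact mem_Ici.2 (by positivity)
    have tcy := dist_triangle_left K.center y x
    have tcz := dist_triangle_left K.center z x
    have hxz0 : 0 ≤ dist x z := dist_nonneg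
    have b4 := aux_kernel p (R k) (dist K.center y) (dist K.center z) r hp0 (hR0 k)
      dist_nonneg dist_nonneg (by simp only [hRdef]; linarith) (by simp only [hRdef]; linarith)
    have e2 : 2 * (n : ℝ) + δ = 2 * p := by rw [hpdef]; ring
    rw [e2, div_eq_mul_one_div]
    have i1 := hF1 (dist x K.center)
    have i2 := hF2 r
    have i3 := hF3 (1 + (‖x + y‖ + ‖x + z‖) / (1 + dist x y + dist x z))
    have j1 := hF1 K.len
    have j2 := hF2 K.len
    have j3 := hf0 k
    have hr0 : 0 < r := by linarith
    calc _ ≤ F₁ K.len * F₂ K.len * f k * K.len ^ δ *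
          (3 ^ (2 * p) * ((R k + dist K.center y) ^ (-p) * (R k + dist K.center z) ^ (-p))) := by
          gcongr
      _ = _ := by rw [hA]; ring
  have hsum : Summable (fun k : ℕ => (2 : ℝ) ^ (-(k : ℝ) * θ) * f k) := by
    obtain ⟨B, hB⟩ := hB3
    have hg : Summable (fun k : ℕ => ((2 : ℝ) ^ (-θ)) ^ k * B) :=
      (summable_geometric_of_lt_one (by positivity)
        (Real.rpow_lt_one_of_one_lt_of_neg (by norm_num) (by linarith))).mul_right B
    refine Summable.of_nonneg_of_le (fun k => mul_nonneg (by positivity) (hf0 k)) (fun k => ?_) hg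
    rw [← Real.rpow_natCast, ← Real.rpow_mul (by norm_num),
      show -θ * (k : ℝ) = -(k : ℝ) * θ by ring]
    gcongr
    exact hB ⟨_, rfl⟩
  have hint : ∀ k, ∫⁻ y, G k y = ENNReal.ofReal (R k ^ (-(δ / 2)) * d) := by
    intro k
    simp only [hG]
    rw [aux_int p (R k) (hR0 k), ← hD, hDd,
      ← ENNReal.ofReal_mul (Real.rpow_nonneg (hR0 k).le _)]
    congr 3
    rw [hpdef]; ring
  set V : ℝ := (volume K.toSet).toReal with hV
  have hV0 : 0 ≤ V := ENNReal.toReal_nonneg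
  have hVe : volume K.toSet = ENNReal.ofReal V :=
    (ENNReal.ofReal_toReal (aux_vol_ne_top K)).symm
  calc _ ≤ ∫⁻ z in (J.toSet)ᶜ, ∫⁻ y in ((K.dilate 3 (by norm_num)).toSet)ᶜ, ∫⁻ x in K.toSet,
        ∑' k, ENNReal.ofReal (A * f k) * (G k y * G k z) := by
        refine setLIntegral_mono' (aux_measurableSet J).compl (fun z hz => ?_)
        refine lintegral_mono (fun y => ?_)
        exact setLIntegral_mono' (aux_measurableSet K) (fun x hx => hpt z hz y x hx)
    _ ≤ ∫⁻ z, ∫⁻ y, ∫⁻ x in K.toSet,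
        ∑' k, ENNReal.ofReal (A * f k) * (G k y * G k z) := by
        refine (setLIntegral_le_lintegral _ _).trans (lintegral_mono (fun z => ?_))
        exact setLIntegral_le_lintegral _ _
    _ = ∑' k, ENNReal.ofReal (A * f k) * ((∫⁻ y, G k y) * (∫⁻ z, G k z)) * ENNReal.ofReal V := by
        simp only [lintegral_const, Measure.restrict_apply_univ, hVe]
        have s1 : ∀ z, ∫⁻ y, (∑' k, ENNReal.ofReal (A * f k) * (G k y * G k z)) *
            ENNReal.ofReal V = (∑' k, ENNReal.ofReal (A * f k) * ((∫⁻ y, G k y) * G k z)) *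
            ENNReal.ofReal V := by
          intro z
          rw [lintegral_mul_const' _ _ ENNReal.ofReal_ne_top, lintegral_tsum]
          · congr 2
            ext k
            rw [lintegral_const_mul' _ _ ENNReal.ofReal_ne_top, lintegral_mul_const _ (hGm k)]
          · intro k
            exact (((hGm k).mul_const _).const_mul _).aemeasurable
        simp_rw [s1]
        rw [lintegral_mul_const' _ _ ENNReal.ofReal_ne_top, lintegral_tsum, ENNReal.tsum_mul_right]
        · congr 2
          ext k
          rw [lintegral_const_mul' _ _ ENNReal.ofReal_ne_top, lintegral_const_mul _ (hGm k)]
        · intro k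
          exact (((hGm k).const_mul _).const_mul _).aemeasurable
    _ ≤ ∑' k : ℕ, ENNReal.ofReal ((A * (2 ^ δ * l ^ (-δ)) * (d ^ 2 + 1) * V) *
          ((2 : ℝ) ^ (-(k : ℝ) * θ) * f k)) := by
        refine ENNReal.tsum_le_tsum (fun k => ?_)
        have q0 : 0 ≤ R k ^ (-(δ / 2)) := Real.rpow_nonneg (hR0 k).le _
        have hfk := hf0 k
        rw [hint k, ← ENNReal.ofReal_mul (by positivity), ← ENNReal.ofReal_mul (by positivity),
          ← ENNReal.ofReal_mul (by positivity)]
        apply ENNReal.ofReal_le_ofReal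
        have q1 : R k ^ (-(δ / 2)) * R k ^ (-(δ / 2)) = R k ^ (-δ) := by
          rw [← Real.rpow_add (hR0 k)]; congr 1; ring
        have q2 := auxR_bound l J.len δ θ hl0 hlJ hδ0 hθδ k
        calc _ = A * f k * (R k ^ (-δ) * d ^ 2) * V := by rw [← q1]; ring
          _ ≤ A * f k * ((2 ^ δ * (2 : ℝ) ^ (-(k : ℝ) * θ) * l ^ (-δ)) * (d ^ 2 + 1)) * V := by
            gcongr
            linarith
          _ = _ := by ring
    _ = _ := by
        rw [← ENNReal.ofReal_tsum_of_nonneg _ (hsum.mul_left _), tsum_mul_left]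
        · congr 1
          have e3 : (K.len / l) ^ δ = K.len ^ δ * l ^ (-δ) := by
            rw [Real.div_rpow hK0.le hl0.le, Real.rpow_neg hl0.le, div_eq_mul_inv]
          rw [e3, hA]
          simp only [Ft3, hf]
          ring
        · intro k
          have hfk := hf0 k
          positivity
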